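/- arXiv:0704.0329 — 2 statements merged into one kernel-verified Lean document; each statement's English description precedes it below -/
import Mathlib

section
/- Let β ∈ (0,1), λ ∈ ℂ, c ∈ ℂ, and let φ : [0,∞) → ℂ be continuously differentiable with φ and φ′ bounded. Define u(t) = c E_{β,1}(−λ t^β) + ∫₀^t φ(t−ξ) ξ^{β−1} E_{β,β}(−λ ξ^β) dξ. Then u(0) = c and for every t > 0 the Caputo fractional derivative of order β of u satisfies (1/Γ(1−β)) ∫₀^t u′(τ) (t−τ)^{−β} dτ = −λ u(t) + φ(t). -/
open scoped Real
open MeasureTheory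

noncomputable def mittagLeffler (α γ : ℝ) (z : ℂ) : ℂ :=
  ∑' n : ℕ, z ^ n / (Real.Gamma (α * n + γ) : ℂ)

lemma ml_gamma_lower {M s : ℝ} (hM : 0 < M) (hs : 1 ≤ s) :
    M ^ (s - 1) * Real.exp (-M) ≤ Real.Gamma s := by
  have hs0 : 0 < s := by linarith
  rw [Real.Gamma_eq_integral hs0]
  have hint := Real.GammaIntegral_convergent hs0
  have h1 : ∫ x in Set.Ioi M, Real.exp (-x) * M ^ (s - 1) = M ^ (s - 1) * Real.exp (-M) := by
    rw [integral_mul_const, integral_exp_neg_Ioi, mul_comm]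
  rw [← h1]
  have hsub : Set.Ioi M ⊆ Set.Ioi (0 : ℝ) := Set.Ioi_subset_Ioi hM.le
  calc ∫ x in Set.Ioi M, Real.exp (-x) * M ^ (s - 1)
      ≤ ∫ x in Set.Ioi M, Real.exp (-x) * x ^ (s - 1) := by
        apply setIntegral_mono_on
        · exact (integrableOn_exp_neg_Ioi M).mul_const _
        · exact hint.mono_set hsub
        · exact measurableSet_Ioi
        · intro x hx
          have hx' : M < x := hx
          gcongr
    _ ≤ ∫ x in Set.Ioi 0, Real.exp (-x) * x ^ (s - 1) := by
        apply setIntegral_mono_set hint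
        · refine (ae_restrict_iff' measurableSet_Ioi).2 (Filter.Eventually.of_forall fun x hx => ?_)
          have hx' : (0:ℝ) < x := hx
          simp only [Pi.zero_apply]
          positivity
        · exact hsub.eventuallyLE

lemma ml_summable {α γ : ℝ} (hα : 0 < α) (hγ : 0 < γ) (x : ℝ) (hx : 0 ≤ x) :
    Summable fun n : ℕ => x ^ n / Real.Gamma (α * n + γ) := by
  set M : ℝ := (2 * x + 1) ^ (1 / α) with hM
  have hb : 0 < 2 * x + 1 := by linarith
  have hM0 : 0 < M := Real.rpow_pos_of_pos hb _
  have hMα : ∀ n : ℕ, M ^ (α * n) = (2 * x + 1) ^ n := by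
    intro n
    rw [hM, ← Real.rpow_mul hb.le, ← Real.rpow_natCast]
    congr 1
    field_simp
  have hg : Summable fun n : ℕ => (M ^ (γ - 1) * Real.exp (-M))⁻¹ * (x / (2 * x + 1)) ^ n := by
    apply Summable.mul_left
    apply summable_geometric_of_lt_one (by positivity)
    rw [div_lt_one hb]; linarith
  refine Summable.of_norm_bounded_eventually_nat hg ?_
  obtain ⟨N, hN⟩ := exists_nat_ge (1 / α)
  filter_upwards [Filter.eventually_ge_atTop N] with n hn
  have hn' : (N : ℝ) ≤ n := by exact_mod_cast hn
  have h1 : 1 ≤ α * n + γ := by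
    have : 1 / α ≤ n := hN.trans hn'
    rw [div_le_iff₀ hα] at this
    nlinarith
  have hG := ml_gamma_lower hM0 h1
  have : M ^ (α * n + γ - 1) = (2 * x + 1) ^ n * M ^ (γ - 1) := by
    rw [← hMα, ← Real.rpow_add hM0]; congr 1; ring
  rw [this] at hG
  have hG0 : 0 < Real.Gamma (α * n + γ) := Real.Gamma_pos_of_pos (by linarith)
  rw [Real.norm_of_nonneg (by positivity)]
  have hp : 0 < M ^ (γ - 1) := Real.rpow_pos_of_pos hM0 _
  calc x ^ n / Real.Gamma (α * n + γ)
      ≤ x ^ n / ((2 * x + 1) ^ n * M ^ (γ - 1) * Real.exp (-M)) := by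
        gcongr
    _ = _ := by
      rw [div_pow]; field_simp

lemma ml_norm_term {α γ : ℝ} (hα : 0 < α) (hγ : 0 < γ) (z : ℂ) (n : ℕ) :
    ‖z ^ n / (Real.Gamma (α * n + γ) : ℂ)‖ = ‖z‖ ^ n / Real.Gamma (α * n + γ) := by
  have hG0 : 0 < Real.Gamma (α * n + γ) := Real.Gamma_pos_of_pos (by positivity)
  rw [norm_div, norm_pow, Complex.norm_real, Real.norm_of_nonneg hG0.le]

lemma ml_hasSum {α γ : ℝ} (hα : 0 < α) (hγ : 0 < γ) (z : ℂ) :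
    HasSum (fun n : ℕ => z ^ n / (Real.Gamma (α * n + γ) : ℂ)) (mittagLeffler α γ z) := by
  apply Summable.hasSum
  apply Summable.of_norm
  simp_rw [ml_norm_term hα hγ]
  exact ml_summable hα hγ _ (norm_nonneg _)

lemma ml_continuous {α γ : ℝ} (hα : 0 < α) (hγ : 0 < γ) :
    Continuous (mittagLeffler α γ) := by
  rw [continuous_iff_continuousAt]
  intro z
  have : ContinuousOn (mittagLeffler α γ) (Metric.ball 0 (‖z‖ + 1)) := by
    unfold mittagLeffler
    apply continuousOn_tsum (u := fun n : ℕ => (‖z‖ + 1) ^ n / Real.Gamma (α * n + γ))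
    · intro i; fun_prop
    · exact ml_summable hα hγ _ (by positivity)
    · intro n x hx
      rw [ml_norm_term hα hγ]
      have hG0 : 0 < Real.Gamma (α * n + γ) := Real.Gamma_pos_of_pos (by positivity)
      have : ‖x‖ ≤ ‖z‖ + 1 := by simpa using (le_of_lt (mem_ball_zero_iff.1 hx))
      gcongr
  exact this.continuousAt (Metric.isOpen_ball.mem_nhds (by simp))

lemma ml_beta_complex {p q t : ℝ} (hp : 0 < p) (hq : 0 < q) (ht : 0 < t) :
    ∫ s in (0:ℝ)..t, s ^ (p - 1) * (t - s) ^ (q - 1) =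
      t ^ (p + q - 1) * (Real.Gamma p * Real.Gamma q / Real.Gamma (p + q)) := by
  have h := Complex.betaIntegral_scaled (p : ℂ) (q : ℂ) ht
  have h2 := Complex.Gamma_mul_Gamma_eq_betaIntegral (s := (p:ℂ)) (t := (q:ℂ)) (by simpa) (by simpa)
  have hG0 : Real.Gamma (p + q) ≠ 0 := (Real.Gamma_pos_of_pos (by positivity)).ne'
  have h3 : Complex.betaIntegral p q = ((Real.Gamma p * Real.Gamma q / Real.Gamma (p + q) : ℝ) : ℂ) := by
    rw [← Complex.ofReal_add, Complex.Gamma_ofReal, Complex.Gamma_ofReal, Complex.Gamma_ofReal] at h2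
    have : (Real.Gamma (p + q) : ℂ) ≠ 0 := by exact_mod_cast hG0
    push_cast
    field_simp
    rw [h2]; ring
  apply Complex.ofReal_injective
  rw [← intervalIntegral.integral_ofReal]
  rw [h3] at h
  push_cast at h ⊢
  rw [Complex.ofReal_cpow ht.le]
  push_cast
  rw [← h]
  apply intervalIntegral.integral_congr
  intro s hs
  rw [Set.uIcc_of_le ht.le] at hs
  simp only
  rw [Complex.ofReal_cpow hs.1, Complex.ofReal_cpow (by linarith [hs.2])]
  push_cast
  rfl

lemma ml_beta_integrable {p q t : ℝ} (hp : 0 < p) (hq : 0 < q) (ht : 0 < t) :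
    IntervalIntegrable (fun s => s ^ (p - 1) * (t - s) ^ (q - 1)) volume 0 t := by
  by_contra hcon
  have h := ml_beta_complex hp hq ht
  rw [intervalIntegral.integral_undef hcon] at h
  have h1 : 0 < Real.Gamma (p + q) := Real.Gamma_pos_of_pos (by positivity)
  have h2 : 0 < Real.Gamma p := Real.Gamma_pos_of_pos (by positivity)
  have h3 : 0 < Real.Gamma q := Real.Gamma_pos_of_pos (by positivity)
  have : 0 < t ^ (p + q - 1) * (Real.Gamma p * Real.Gamma q / Real.Gamma (p + q)) := by positivity
  linarith

/-- The kernel `s^(β-1) E_{β,β}(-λ s^β)`. -/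
noncomputable def mlKer (β : ℝ) (lam : ℂ) (s : ℝ) : ℂ :=
  ((s ^ (β - 1) : ℝ) : ℂ) * mittagLeffler β β (-lam * ((s ^ β : ℝ) : ℂ))

lemma ml_comp_continuous {β γ : ℝ} (hβ : 0 < β) (hγ : 0 < γ) (lam : ℂ) :
    Continuous fun s : ℝ => mittagLeffler β γ (-lam * ((s ^ β : ℝ) : ℂ)) := by
  apply (ml_continuous hβ hγ).comp
  have : Continuous fun s : ℝ => s ^ β := Real.continuous_rpow_const hβ.le
  fun_prop

lemma ml_ofReal_ii {f : ℝ → ℝ} {a b : ℝ} (h : IntervalIntegrable f volume a b) :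
    IntervalIntegrable (fun x => (f x : ℂ)) volume a b :=
  ⟨h.1.ofReal, h.2.ofReal⟩

lemma mlKer_intervalIntegrable {β : ℝ} (hβ : 0 < β) (lam : ℂ) (a b : ℝ) :
    IntervalIntegrable (mlKer β lam) volume a b := by
  have h1 : IntervalIntegrable (fun s : ℝ => ((s ^ (β - 1) : ℝ) : ℂ)) volume a b :=
    ml_ofReal_ii (intervalIntegral.intervalIntegrable_rpow' (by linarith))
  exact h1.mul_continuousOn (ml_comp_continuous hβ hβ lam).continuousOn

lemma mlKer_continuousAt {β : ℝ} (hβ : 0 < β) (lam : ℂ) {s : ℝ} (hs : 0 < s) :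
    ContinuousAt (mlKer β lam) s := by
  unfold mlKer
  apply ContinuousAt.mul
  · exact Complex.continuous_ofReal.continuousAt.comp
      (Real.continuousAt_rpow_const _ _ (Or.inl hs.ne'))
  · exact (ml_comp_continuous hβ hβ lam).continuousAt

lemma mlKer_mul_integrable {β a t : ℝ} (hβ : 0 < β) (ha : 0 < a) (ht : 0 < t) (lam : ℂ) :
    IntervalIntegrable (fun s => mlKer β lam s * (((t - s) ^ (a - 1) : ℝ) : ℂ)) volume 0 t := by
  have h1 : IntervalIntegrable (fun s : ℝ => ((s ^ (β - 1) * (t - s) ^ (a - 1) : ℝ) : ℂ))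
      volume 0 t := ml_ofReal_ii (ml_beta_integrable hβ ha ht)
  have h2 := h1.mul_continuousOn (ml_comp_continuous hβ hβ lam).continuousOn
  refine h2.congr (fun s _ => ?_)
  simp only [mlKer]
  push_cast
  ring

lemma mlKer_conv {β a t : ℝ} (hβ : 0 < β) (ha : 0 < a) (ht : 0 < t) (lam : ℂ) :
    ∫ s in (0:ℝ)..t, mlKer β lam s * (((t - s) ^ (a - 1) : ℝ) : ℂ) =
      (Real.Gamma a : ℂ) * ((t ^ (a + β - 1) : ℝ) : ℂ) *
        mittagLeffler β (β + a) (-lam * ((t ^ β : ℝ) : ℂ)) := by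
  have hGa : 0 < Real.Gamma a := Real.Gamma_pos_of_pos ha
  set R : ℕ → ℝ → ℝ := fun n s => s ^ (β * n + β - 1) * (t - s) ^ (a - 1) with hR
  set C : ℕ → ℂ := fun n => (-lam) ^ n / (Real.Gamma (β * n + β) : ℂ) with hC
  have hpn : ∀ n : ℕ, 0 < β * n + β := fun n => by positivity
  have hpow : ∀ n : ℕ, t ^ (β * n + β + a - 1) = t ^ (a + β - 1) * (t ^ β) ^ n := by
    intro n
    rw [← Real.rpow_natCast, ← Real.rpow_mul ht.le, ← Real.rpow_add ht]
    congr 1; ring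
  have hRint : ∀ n, ∫ s in Set.Ioc 0 t, R n s = t ^ (a + β - 1) * (t ^ β) ^ n *
      (Real.Gamma (β * n + β) * Real.Gamma a / Real.Gamma (β * n + (β + a))) := by
    intro n
    rw [← intervalIntegral.integral_of_le ht.le, ml_beta_complex (hpn n) ha ht, hpow, add_assoc (β * n) β a]
  have hRi : ∀ n, IntegrableOn (R n) (Set.Ioc 0 t) := fun n =>
    (intervalIntegrable_iff_integrableOn_Ioc_of_le ht.le).1 (ml_beta_integrable (hpn n) ha ht)
  have hRnn : ∀ n, ∀ s ∈ Set.Ioc 0 t, 0 ≤ R n s := by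
    intro n s hs
    have := hs.1
    have h2 : 0 ≤ t - s := by linarith [hs.2]
    simp only [hR]; positivity
  have hnorm : ∀ n, ∫ s in Set.Ioc 0 t, ‖C n * (R n s : ℂ)‖ = (Real.Gamma a * t ^ (a + β - 1)) *
      ((‖lam‖ * t ^ β) ^ n / Real.Gamma (β * n + (β + a))) := by
    intro n
    have h1 : ∫ s in Set.Ioc 0 t, ‖C n * (R n s : ℂ)‖ = ∫ s in Set.Ioc 0 t, ‖C n‖ * R n s := by
      apply setIntegral_congr_fun measurableSet_Ioc
      intro s hs
      simp only [norm_mul, Complex.norm_real, Real.norm_of_nonneg (hRnn n s hs)]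
    rw [h1, integral_const_mul, hRint, hC]
    simp only
    rw [ml_norm_term hβ hβ, norm_neg]
    have := Real.Gamma_pos_of_pos (hpn n)
    rw [mul_pow]
    field_simp
  have key := hasSum_integral_of_summable_integral_norm (μ := volume.restrict (Set.Ioc 0 t))
    (F := fun n s => C n * (R n s : ℂ)) (fun n => ((hRi n).ofReal (𝕜 := ℂ)).const_mul (C n)) (by
      simp_rw [hnorm]
      exact (ml_summable hβ (by positivity) _ (by positivity)).mul_left _)
  have hml := (ml_hasSum hβ (γ := β + a) (by positivity) (-lam * ((t ^ β : ℝ) : ℂ))).mul_left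
    ((Real.Gamma a : ℂ) * ((t ^ (a + β - 1) : ℝ) : ℂ))
  have hterm : ∀ n, ∫ s in Set.Ioc 0 t, C n * (R n s : ℂ) =
      ((Real.Gamma a : ℂ) * ((t ^ (a + β - 1) : ℝ) : ℂ)) *
       ((-lam * ((t ^ β : ℝ) : ℂ)) ^ n / (Real.Gamma (β * n + (β + a)) : ℂ)) := by
    intro n
    rw [integral_const_mul, integral_complex_ofReal, hRint, hC]
    have : (Real.Gamma (β * n + β) : ℂ) ≠ 0 := by
      exact_mod_cast (Real.Gamma_pos_of_pos (hpn n)).ne'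
    push_cast
    rw [mul_pow]
    generalize (Real.Gamma (β * n + β) : ℂ) = X at this ⊢
    field_simp
  simp_rw [hterm] at key
  rw [← hml.unique key |>.symm, intervalIntegral.integral_of_le ht.le]
  apply setIntegral_congr_fun measurableSet_Ioc
  intro s hs
  have hs0 := hs.1
  have h1 := (ml_hasSum hβ hβ (-lam * ((s ^ β : ℝ) : ℂ))).mul_left
    (((s ^ (β - 1) : ℝ) : ℂ) * (((t - s) ^ (a - 1) : ℝ) : ℂ))
  simp only [mlKer]
  rw [mul_right_comm, ← h1.tsum_eq]
  congr 1
  ext n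
  have : s ^ (β * n + β - 1) = s ^ (β - 1) * (s ^ β) ^ n := by
    rw [← Real.rpow_natCast, ← Real.rpow_mul hs0.le, ← Real.rpow_add hs0]
    congr 1; ring
  simp only [hC, hR, this]
  push_cast
  ring

lemma mlKer_abel {β t : ℝ} (hβ : 0 < β) (hβ1 : β < 1) (ht : 0 < t) (lam : ℂ) :
    ∫ s in (0:ℝ)..t, mlKer β lam s * (((t - s) ^ (-β) : ℝ) : ℂ) =
      (Real.Gamma (1 - β) : ℂ) * mittagLeffler β 1 (-lam * ((t ^ β : ℝ) : ℂ)) := by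
  have := mlKer_conv hβ (a := 1 - β) (by linarith) ht lam
  simpa using this

lemma ml_zero {β : ℝ} : mittagLeffler β 1 0 = 1 := by
  unfold mittagLeffler
  rw [tsum_eq_single 0]
  · simp
  · intro n hn; simp [hn]

lemma ml_one_eq {β t : ℝ} (hβ : 0 < β) (ht : 0 ≤ t) (lam : ℂ) :
    mittagLeffler β 1 (-lam * ((t ^ β : ℝ) : ℂ)) = 1 - lam * ∫ s in (0:ℝ)..t, mlKer β lam s := by
  rcases ht.eq_or_lt with rfl | ht
  · simp [Real.zero_rpow hβ.ne', ml_zero]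
  have h := mlKer_conv hβ (a := 1) one_pos ht lam
  simp only [sub_self, Real.rpow_zero, Complex.ofReal_one, mul_one, Real.Gamma_one, one_mul,
    add_sub_cancel_left] at h
  rw [h]
  set z := -lam * ((t ^ β : ℝ) : ℂ) with hz
  have h1 := ml_hasSum hβ one_pos z
  have h2 := (ml_hasSum hβ (γ := β + 1) (by positivity) z).mul_left z
  have h3 := (hasSum_nat_add_iff' 1).2 h1
  have h4 : HasSum (fun n : ℕ => z ^ (n + 1) / (Real.Gamma (β * ((n + 1 : ℕ) : ℝ) + 1) : ℂ))
      (z * mittagLeffler β (β + 1) z) := by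
    refine (congrArg (fun F => HasSum F (z * mittagLeffler β (β + 1) z)) (funext fun n => ?_)).mpr h2
    rw [pow_succ, show β * ((n + 1 : ℕ) : ℝ) + 1 = β * n + (β + 1) by push_cast; ring]
    ring
  have h5 := h3.unique h4
  simp at h5
  rw [sub_eq_iff_eq_add] at h5
  rw [h5, hz]; ring

lemma conv_ind {f g : ℝ → ℂ} {t τ : ℝ} (h0 : 0 ≤ τ) (h1 : τ ≤ t) :
    ∫ x, (Set.Ioc 0 t).indicator f x * (Set.Ioc 0 t).indicator g (τ - x) =
      ∫ x in (0:ℝ)..τ, f x * g (τ - x) := by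
  rw [intervalIntegral.integral_of_le h0, integral_Ioc_eq_integral_Ioo,
    ← integral_indicator measurableSet_Ioo]
  congr 1
  ext x
  simp only [Set.indicator_apply, Set.mem_Ioc, Set.mem_Ioo]
  by_cases hx : 0 < x ∧ x < τ
  · rw [if_pos hx, if_pos ⟨hx.1, by linarith⟩, if_pos ⟨by linarith, by linarith⟩]
  · rw [if_neg hx]
    by_cases h2 : 0 < x ∧ x ≤ t
    · have : ¬ (0 < τ - x ∧ τ - x ≤ t) := by
        rintro ⟨h3, -⟩; exact hx ⟨h2.1, by linarith⟩
      rw [if_neg this, mul_zero]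
    · rw [if_neg h2, zero_mul]

lemma conv_assoc_interval {f g h : ℝ → ℂ} {t : ℝ} (ht : 0 < t) (hf : Continuous f)
    (hg : IntervalIntegrable g volume 0 t) (hh : IntervalIntegrable h volume 0 t) :
    ∫ τ in (0:ℝ)..t, (∫ ξ in (0:ℝ)..τ, f (τ - ξ) * g ξ) * h (t - τ) =
      ∫ s in (0:ℝ)..t, f s * ∫ η in (0:ℝ)..(t - s), g η * h (t - s - η) := by
  set F := (Set.Ioc 0 t).indicator f with hF
  set G := (Set.Ioc 0 t).indicator g with hG
  set H := (Set.Ioc 0 t).indicator h with hH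
  have hGi : Integrable G := (integrable_indicator_iff measurableSet_Ioc).2
    ((intervalIntegrable_iff_integrableOn_Ioc_of_le ht.le).1 hg)
  have hHi : Integrable H := (integrable_indicator_iff measurableSet_Ioc).2
    ((intervalIntegrable_iff_integrableOn_Ioc_of_le ht.le).1 hh)
  have hFi : Integrable F := (integrable_indicator_iff measurableSet_Ioc).2
    ((intervalIntegrable_iff_integrableOn_Ioc_of_le ht.le).1 (hf.intervalIntegrable _ _))
  obtain ⟨B, hB⟩ := (isCompact_Icc (a := (0:ℝ)) (b := t)).exists_bound_of_continuousOn hf.continuousOn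
  have hFB : ∀ x, ‖F x‖ ≤ max B 0 := by
    intro x
    by_cases hx : x ∈ Set.Ioc 0 t
    · rw [hF, Set.indicator_of_mem hx]
      exact (hB x ⟨hx.1.le, hx.2⟩).trans (le_max_left _ _)
    · rw [hF, Set.indicator_of_notMem hx]; simp
  have key := convolution_assoc (ContinuousLinearMap.mul ℝ ℂ) (ContinuousLinearMap.mul ℝ ℂ)
    (ContinuousLinearMap.mul ℝ ℂ) (ContinuousLinearMap.mul ℝ ℂ) (f := F) (g := G) (k := H)
    (μ := volume) (ν := volume) (x₀ := t)
    (fun x y z => by simp [mul_assoc]) hFi.aestronglyMeasurable hGi.aestronglyMeasurable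
    hHi.aestronglyMeasurable (hFi.ae_convolution_exists _ hGi)
    (hGi.norm.ae_convolution_exists _ hHi.norm) (by
      have h1 := (hGi.norm.integrable_convolution (ContinuousLinearMap.mul ℝ ℝ) hHi.norm).comp_sub_left t
      refine h1.bdd_mul (c := max B 0) hFi.norm.aestronglyMeasurable ?_
      exact Filter.Eventually.of_forall fun x => by simpa using hFB x)
  simp only [convolution_def, ContinuousLinearMap.mul_apply'] at key
  have hL : ∫ τ, (∫ x, F x * G (τ - x)) * H (t - τ) =
      ∫ τ in (0:ℝ)..t, (∫ ξ in (0:ℝ)..τ, f (τ - ξ) * g ξ) * h (t - τ) := by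
    rw [intervalIntegral.integral_of_le ht.le, integral_Ioc_eq_integral_Ioo,
      ← integral_Ico_eq_integral_Ioo, ← integral_indicator measurableSet_Ico]
    congr 1
    ext τ
    by_cases hτ : τ ∈ Set.Ico 0 t
    · rw [Set.indicator_of_mem hτ, conv_ind hτ.1 hτ.2.le, hH, Set.indicator_of_mem]
      · congr 1
        have := intervalIntegral.integral_comp_sub_left (a := 0) (b := τ)
          (fun x => f x * g (τ - x)) τ
        simpa using this.symm
      · exact ⟨by linarith [hτ.2], by linarith [hτ.1]⟩
    · rw [Set.indicator_of_notMem hτ, hH, Set.indicator_of_notMem, mul_zero]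
      rintro ⟨h1, h2⟩
      exact hτ ⟨by linarith, by linarith⟩
  have hRt : ∫ s, F s * (∫ x, G x * H (t - s - x)) =
      ∫ s in (0:ℝ)..t, f s * ∫ η in (0:ℝ)..(t - s), g η * h (t - s - η) := by
    rw [intervalIntegral.integral_of_le ht.le, ← integral_indicator measurableSet_Ioc]
    congr 1
    ext s
    by_cases hs : s ∈ Set.Ioc 0 t
    · rw [Set.indicator_of_mem hs, hF, Set.indicator_of_mem hs,
        conv_ind (by linarith [hs.2]) (by linarith [hs.1])]
    · rw [Set.indicator_of_notMem hs, hF, Set.indicator_of_notMem hs, zero_mul]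
  rw [← hL, ← hRt]
  exact key

lemma conv_continuousOn {f k : ℝ → ℂ} (hf : Continuous f) (hfb : ∃ C : ℝ, ∀ t ≥ (0 : ℝ), ‖f t‖ ≤ C)
    (hk : ∀ a b, IntervalIntegrable k volume a b) (T : ℝ) :
    ContinuousOn (fun τ => ∫ ξ in (0:ℝ)..τ, f (τ - ξ) * k ξ) (Set.Icc 0 T) := by
  obtain ⟨C, hC⟩ := hfb
  set g : ℝ → ℂ := fun x => f (max x 0) - f 0 with hg
  have hgc : Continuous g := by simp only [hg]; fun_prop
  have hgb : ∀ x, ‖g x‖ ≤ C + C := fun x =>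
    (norm_sub_le _ _).trans (add_le_add (hC _ (le_max_right _ _)) (hC _ le_rfl))
  have h1 : Continuous fun τ => ∫ ξ in (0:ℝ)..T, g (τ - ξ) * k ξ := by
    apply intervalIntegral.continuous_of_dominated_interval (bound := fun ξ => (C + C) * ‖k ξ‖)
    · intro τ
      have : Continuous fun ξ => g (τ - ξ) := by fun_prop
      exact this.aestronglyMeasurable.mul (hk 0 T).def'.aestronglyMeasurable
    · intro τ
      refine Filter.Eventually.of_forall fun ξ _ => ?_
      rw [norm_mul]
      exact mul_le_mul_of_nonneg_right (hgb _) (norm_nonneg _)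
    · exact (hk 0 T).norm.const_mul _
    · refine Filter.Eventually.of_forall fun ξ _ => ?_
      fun_prop
  have h2 : Continuous fun τ => ∫ ξ in (0:ℝ)..τ, k ξ := intervalIntegral.continuous_primitive hk 0
  refine (h1.add (h2.const_mul (f 0))).continuousOn.congr ?_
  intro τ hτ
  have hi : ∀ a b, IntervalIntegrable (fun ξ => g (τ - ξ) * k ξ) volume a b := fun a b =>
    (hk a b).continuousOn_mul (by fun_prop)
  simp only [Pi.add_apply]
  rw [← intervalIntegral.integral_add_adjacent_intervals (hi 0 τ) (hi τ T)]
  have h3 : ∫ ξ in τ..T, g (τ - ξ) * k ξ = 0 := by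
    rw [← intervalIntegral.integral_zero (a := τ) (b := T) (μ := volume)]
    apply intervalIntegral.integral_congr
    intro ξ hξ
    rw [Set.uIcc_of_le hτ.2] at hξ
    simp only [hg]
    rw [max_eq_right (by linarith [hξ.1])]; simp
  rw [h3, add_zero, ← intervalIntegral.integral_const_mul, ← intervalIntegral.integral_add (hi 0 τ)
    ((hk 0 τ).const_mul _)]
  apply intervalIntegral.integral_congr
  intro ξ hξ
  rw [Set.uIcc_of_le hτ.1] at hξ
  simp only [hg]
  rw [max_eq_left (by linarith [hξ.2])]; ring

theorem caputo_solution_with_source (β : ℝ) (hβ : β ∈ Set.Ioo (0 : ℝ) 1)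
    (lam c : ℂ) (φ : ℝ → ℂ) (hφ : ContDiff ℝ 1 φ)
    (hφb : ∃ C : ℝ, ∀ t ≥ (0 : ℝ), ‖φ t‖ ≤ C)
    (hφ'b : ∃ C : ℝ, ∀ t ≥ (0 : ℝ), ‖deriv φ t‖ ≤ C)
    (u : ℝ → ℂ)
    (hu : ∀ t : ℝ, u t =
      c * mittagLeffler β 1 (-lam * ((t ^ β : ℝ) : ℂ)) +
      ∫ ξ in (0 : ℝ)..t, φ (t - ξ) * ((ξ ^ (β - 1) : ℝ) : ℂ) *
        mittagLeffler β β (-lam * ((ξ ^ β : ℝ) : ℂ))) :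
    u 0 = c ∧
      ∀ t : ℝ, 0 < t →
        (1 / (Real.Gamma (1 - β) : ℂ)) *
            ∫ τ in (0 : ℝ)..t, deriv u τ * (((t - τ) ^ (-β) : ℝ) : ℂ) =
          -lam * u t + φ t := by
  obtain ⟨hβ0, hβ1⟩ := hβ
  refine ⟨by rw [hu]; simp [Real.zero_rpow hβ0.ne', ml_zero], ?_⟩
  have hk := mlKer_intervalIntegrable hβ0 lam
  set k := mlKer β lam with hkdef
  set K : ℝ → ℂ := fun τ => ∫ s in (0:ℝ)..τ, k s with hK
  set f := deriv φ with hf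
  have hfc : Continuous f := hφ.continuous_deriv le_rfl
  have hφd : ∀ x, HasDerivAt φ (f x) x := fun x =>
    (hφ.differentiable one_ne_zero x).hasDerivAt
  have hKc : Continuous K := intervalIntegral.continuous_primitive hk 0
  have hKd : ∀ x, 0 < x → HasDerivAt K (k x) x := by
    intro x hx
    refine intervalIntegral.integral_hasDerivAt_right (hk 0 x) ?_ (mlKer_continuousAt hβ0 lam hx)
    refine ⟨Set.uIoc (x - 1) (x + 1), ?_, (hk _ _).def'.aestronglyMeasurable⟩
    rw [Set.uIoc_of_le (by linarith)]
    exact Ioc_mem_nhds (by linarith) (by linarith)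
  set w : ℝ → ℂ := fun τ => ∫ ξ in (0:ℝ)..τ, f (τ - ξ) * k ξ with hw
  have hwc : ∀ T, ContinuousOn w (Set.Icc 0 T) := conv_continuousOn hfc hφ'b hk
  have hwi : ∀ T, 0 ≤ T → IntervalIntegrable w volume 0 T := fun T hT =>
    (by rw [Set.uIcc_of_le hT]; exact hwc T : ContinuousOn w (Set.uIcc 0 T)).intervalIntegrable
  -- integration by parts
  have ibp : ∀ t, 0 < t → ∫ ξ in (0:ℝ)..t, φ (t - ξ) * k ξ =
      φ 0 * K t + ∫ ξ in (0:ℝ)..t, f (t - ξ) * K ξ := by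
    intro t ht
    have := intervalIntegral.integral_mul_deriv_eq_deriv_mul_of_hasDerivAt (a := 0) (b := t)
      (u := fun ξ => φ (t - ξ)) (u' := fun ξ => - f (t - ξ)) (v := K) (v' := k)
      (hφ.continuous.comp (by fun_prop)).continuousOn hKc.continuousOn
      (fun x _ => by simpa using (hφd (t - x)).comp_const_sub t x)
      (fun x hx => hKd x (by rw [min_eq_left ht.le] at hx; exact hx.1))
      (by apply Continuous.intervalIntegrable; fun_prop) (hk 0 t)
    rw [this]
    have hK0 : K 0 = 0 := by simp [hK]
    simp [hK0, intervalIntegral.integral_neg]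
  have hflip : ∀ t, ∫ s in (0:ℝ)..t, f s * K (t - s) = ∫ ξ in (0:ℝ)..t, f (t - ξ) * K ξ := by
    intro t
    have := intervalIntegral.integral_comp_sub_left (a := 0) (b := t)
          (fun x => f x * K (t - x)) t
    simpa using this.symm
  have hwint : ∀ t, 0 < t → ∫ τ in (0:ℝ)..t, w τ = ∫ s in (0:ℝ)..t, f s * K (t - s) := by
    intro t ht
    have := conv_assoc_interval (h := fun _ => 1) ht hfc (hk 0 t)
      (by apply Continuous.intervalIntegrable; fun_prop)
    simpa using this
  have hu' : ∀ t, 0 < t → u t = c + (φ 0 - lam * c) * K t + ∫ τ in (0:ℝ)..t, w τ := by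
    intro t ht
    have h1 : ∫ ξ in (0 : ℝ)..t, φ (t - ξ) * ((ξ ^ (β - 1) : ℝ) : ℂ) *
        mittagLeffler β β (-lam * ((ξ ^ β : ℝ) : ℂ)) = ∫ ξ in (0:ℝ)..t, φ (t - ξ) * k ξ := by
      congr 1; ext ξ; rw [hkdef, mlKer, mul_assoc]
    rw [hu, h1, ibp t ht, ml_one_eq hβ0 ht.le, hwint t ht, hflip]
    ring
  have hud : ∀ t, 0 < t → deriv u t = (φ 0 - lam * c) * k t + w t := by
    intro t ht
    have hwd : HasDerivAt (fun t => ∫ τ in (0:ℝ)..t, w τ) (w t) t := by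
      have hm : Set.Icc 0 (t + 1) ∈ nhds t := Icc_mem_nhds ht (by linarith)
      exact intervalIntegral.integral_hasDerivAt_right (hwi t ht.le)
        ⟨_, hm, (hwc (t + 1)).aestronglyMeasurable measurableSet_Icc⟩ ((hwc (t + 1)).continuousAt hm)
    have h1 := (((hKd t ht).const_mul (φ 0 - lam * c)).const_add c).add hwd
    refine HasDerivAt.deriv (h1.congr_of_eventuallyEq ?_)
    filter_upwards [lt_mem_nhds ht] with s hs
    exact hu' s hs
  intro t ht
  have hG : (Real.Gamma (1 - β) : ℂ) ≠ 0 := by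
    exact_mod_cast (Real.Gamma_pos_of_pos (by linarith)).ne'
  have hsplit : ∫ τ in (0 : ℝ)..t, deriv u τ * (((t - τ) ^ (-β) : ℝ) : ℂ) =
      (φ 0 - lam * c) * (∫ τ in (0 : ℝ)..t, k τ * (((t - τ) ^ (-β) : ℝ) : ℂ)) +
      ∫ τ in (0 : ℝ)..t, w τ * (((t - τ) ^ (-β) : ℝ) : ℂ) := by
    have hi1 : IntervalIntegrable (fun τ => k τ * (((t - τ) ^ (-β) : ℝ) : ℂ)) volume 0 t := by
      have := mlKer_mul_integrable hβ0 (a := 1 - β) (by linarith) ht lam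
      simpa using this
    have hi2 : IntervalIntegrable (fun τ => w τ * (((t - τ) ^ (-β) : ℝ) : ℂ)) volume 0 t := by
      have h0 : IntervalIntegrable (fun x : ℝ => x ^ (-β)) volume t 0 :=
        intervalIntegral.intervalIntegrable_rpow' (by linarith)
      have h1 : IntervalIntegrable (fun τ : ℝ => (((t - τ) ^ (-β) : ℝ) : ℂ)) volume 0 t := by
        have := ml_ofReal_ii (h0.comp_sub_left t)
        simpa using this
      exact h1.continuousOn_mul (by rw [Set.uIcc_of_le ht.le]; exact hwc t)
    rw [← intervalIntegral.integral_const_mul, ← intervalIntegral.integral_add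
      (hi1.const_mul _) hi2, intervalIntegral.integral_of_le ht.le, intervalIntegral.integral_of_le ht.le]
    apply setIntegral_congr_fun measurableSet_Ioc
    intro τ hτ
    simp only [hud τ hτ.1]
    ring
  have hwabel : ∫ τ in (0 : ℝ)..t, w τ * (((t - τ) ^ (-β) : ℝ) : ℂ) =
      (Real.Gamma (1 - β) : ℂ) * (φ t - φ 0 - lam * ∫ s in (0:ℝ)..t, f s * K (t - s)) := by
    have h1 := conv_assoc_interval (h := fun x : ℝ => ((x ^ (-β) : ℝ) : ℂ)) ht hfc (hk 0 t)
      (ml_ofReal_ii (intervalIntegral.intervalIntegrable_rpow' (by linarith)))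
    have h2 : ∫ s in (0:ℝ)..t, f s * (∫ η in (0:ℝ)..(t - s), k η * (((t - s - η) ^ (-β) : ℝ) : ℂ)) =
        ∫ s in (0:ℝ)..t, (Real.Gamma (1 - β) : ℂ) * (f s - lam * (f s * K (t - s))) := by
      rw [intervalIntegral.integral_of_le ht.le, intervalIntegral.integral_of_le ht.le,
        integral_Ioc_eq_integral_Ioo, integral_Ioc_eq_integral_Ioo]
      apply setIntegral_congr_fun measurableSet_Ioo
      intro s hs
      have hts : 0 < t - s := by linarith [hs.2]
      simp only
      rw [hkdef, mlKer_abel hβ0 hβ1 hts, ml_one_eq hβ0 hts.le]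
      ring
    have h3 : ∫ s in (0:ℝ)..t, f s = φ t - φ 0 :=
      intervalIntegral.integral_eq_sub_of_hasDerivAt (fun x _ => hφd x) (hfc.intervalIntegrable _ _)
    refine h1.trans (h2.trans ?_)
    rw [intervalIntegral.integral_const_mul, intervalIntegral.integral_sub
      (hfc.intervalIntegrable _ _) (by apply Continuous.intervalIntegrable; fun_prop), h3,
      intervalIntegral.integral_const_mul]
  rw [hsplit, hwabel, mlKer_abel hβ0 hβ1 ht, ml_one_eq hβ0 ht.le, hu' t ht, hwint t ht]
  field_simp
  ring
end

section
/- Let ν > 0 be real, λ ∈ ℂ, and define u(t) = E_{ν,1}(−λ t^ν) for t ≥ 0. Then for every t ≥ 0, u satisfies the Volterra integral equation u(t) = 1 − (λ/Γ(ν)) ∫₀^t (t−τ)^{ν−1} u(τ) dτ; that is, u(t) = 1 − λ · (₀D_t^{−ν} u)(t), where ₀D_t^{−ν} is the Riemann–Liouville fractional integral of order ν. -/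
open scoped Real
open MeasureTheory

lemma ml_gamma_lower_s6 (A x : ℝ) (hA : 0 < A) (hx : 0 ≤ x) :
    A ^ x * Real.exp (-A) ≤ Real.Gamma (x + 1) := by
  rw [Real.Gamma_eq_integral (by linarith : 0 < x + 1)]
  have hint := Real.GammaIntegral_convergent (by linarith : 0 < x + 1)
  have hsub : Set.Ioi A ⊆ Set.Ioi (0:ℝ) := Set.Ioi_subset_Ioi hA.le
  calc A ^ x * Real.exp (-A) = ∫ s in Set.Ioi A, A ^ x * Real.exp (-s) := by
        rw [integral_const_mul, integral_exp_neg_Ioi]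
    _ ≤ ∫ s in Set.Ioi A, Real.exp (-s) * s ^ (x + 1 - 1) := by
        apply setIntegral_mono_on _ (hint.mono_set hsub) measurableSet_Ioi
        · intro s hs
          have hs' : A < s := hs
          rw [mul_comm, add_sub_cancel_right]
          have := Real.rpow_le_rpow hA.le hs'.le hx
          gcongr
        · exact (integrableOn_exp_neg_Ioi A).const_mul _
    _ ≤ _ := by
        apply setIntegral_mono_set hint _ (Filter.Eventually.of_forall hsub)
        filter_upwards [ae_restrict_mem measurableSet_Ioi] with s hs
        have hs' : 0 < s := hs
        simp only [Pi.zero_apply]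
        positivity

lemma ml_summable_s6 (ν : ℝ) (hν : 0 < ν) (r : ℝ) (hr : 0 ≤ r) :
    Summable (fun n : ℕ => r ^ n / Real.Gamma (ν * n + 1)) := by
  set B : ℝ := r + 1
  have hB : 0 < B := by positivity
  set A : ℝ := B ^ (1 / ν)
  have hA : 0 < A := by positivity
  have hAν : A ^ ν = B := by
    rw [← Real.rpow_mul hB.le, one_div_mul_cancel hν.ne', Real.rpow_one]
  have hg : Summable (fun n : ℕ => Real.exp A * (r / B) ^ n) := by
    apply Summable.mul_left
    apply summable_geometric_of_lt_one (by positivity)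
    rw [div_lt_one hB]
    simp [B]
  refine Summable.of_nonneg_of_le (fun n => ?_) (fun n => ?_) hg
  · have := Real.Gamma_pos_of_pos (by positivity : 0 < ν * n + 1)
    positivity
  · have h := ml_gamma_lower_s6 A (ν * n) hA (by positivity)
    rw [Real.rpow_mul hA.le, hAν, Real.rpow_natCast] at h
    calc r ^ n / Real.Gamma (ν * n + 1) ≤ r ^ n / (B ^ n * Real.exp (-A)) := by gcongr
      _ = _ := by rw [Real.exp_neg, div_pow]; field_simp

lemma ml_beta (ν : ℝ) (hν : 0 < ν) (t : ℝ) (ht : 0 < t) (x : ℝ) (hx : 0 ≤ x) :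
    ∫ τ in (0:ℝ)..t, (t - τ) ^ (ν - 1) * τ ^ x =
      t ^ (x + ν) * (Real.Gamma (x + 1) * Real.Gamma ν / Real.Gamma (x + ν + 1)) := by
  have h := Complex.betaIntegral_scaled ((x + 1 : ℝ) : ℂ) (ν : ℂ) ht
  rw [Complex.betaIntegral_eq_Gamma_mul_div _ _ (by simp; linarith) (by simpa using hν)] at h
  apply Complex.ofReal_injective
  rw [← intervalIntegral.integral_ofReal]
  have e : ∫ τ in (0:ℝ)..t, (((t - τ) ^ (ν - 1) * τ ^ x : ℝ) : ℂ) =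
      ∫ τ in (0:ℝ)..t, (τ : ℂ) ^ (((x + 1 : ℝ) : ℂ) - 1) * ((t : ℂ) - τ) ^ ((ν : ℂ) - 1) := by
    apply intervalIntegral.integral_congr
    intro τ hτ
    rw [Set.uIcc_of_le ht.le] at hτ
    have h1 : 0 ≤ t - τ := by linarith [hτ.2]
    simp only
    rw [Complex.ofReal_mul, Complex.ofReal_cpow h1, Complex.ofReal_cpow hτ.1, mul_comm]
    push_cast
    simp
  rw [e, h]
  rw [Complex.ofReal_mul, Complex.ofReal_cpow ht.le, Complex.ofReal_div, Complex.ofReal_mul,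
    ← Complex.Gamma_ofReal, ← Complex.Gamma_ofReal, ← Complex.Gamma_ofReal]
  push_cast
  congr 2
  · ring
  · congr 1; ring

theorem mittagLeffler_volterra (ν : ℝ) (hν : 0 < ν) (lam : ℂ) (u : ℝ → ℂ)
    (hu : ∀ t : ℝ, u t = mittagLeffler ν 1 (-lam * ((t ^ ν : ℝ) : ℂ))) :
    ∀ t ≥ (0 : ℝ), u t =
      1 - lam / (Real.Gamma ν : ℂ) *
        ∫ τ in (0 : ℝ)..t, (((t - τ) ^ (ν - 1) : ℝ) : ℂ) * u τ := by
  intro t ht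
  have hG : ∀ n : ℕ, 0 < Real.Gamma (ν * n + 1) :=
    fun n => Real.Gamma_pos_of_pos (by positivity)
  have hGν := Real.Gamma_pos_of_pos hν
  have hGνc : (Real.Gamma ν : ℂ) ≠ 0 := by exact_mod_cast hGν.ne'
  have hsum : ∀ z : ℂ, Summable (fun n : ℕ => z ^ n / (Real.Gamma (ν * n + 1) : ℂ)) := by
    intro z
    apply Summable.of_norm
    refine (ml_summable_s6 ν hν ‖z‖ (norm_nonneg _)).congr (fun n => ?_)
    rw [norm_div, norm_pow, Complex.norm_real, Real.norm_of_nonneg (hG n).le]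
  have hsplit : u t = 1 + ∑' n : ℕ, (-lam * ((t ^ ν : ℝ) : ℂ)) ^ (n + 1) /
      (Real.Gamma (ν * (n + 1 : ℕ) + 1) : ℂ) := by
    rw [hu, mittagLeffler, (hsum _).tsum_eq_zero_add]
    simp
  rcases ht.eq_or_lt with h0 | ht
  · subst h0
    rw [hsplit]
    simp [Real.zero_rpow hν.ne']
  set K : ℕ → ℝ → ℝ := fun n τ => (t - τ) ^ (ν - 1) * τ ^ (ν * n) with hK
  have hKint : ∀ n : ℕ, ∫ τ in (0:ℝ)..t, K n τ =
      (t ^ ν) ^ (n + 1) * (Real.Gamma (ν * n + 1) * Real.Gamma ν /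
        Real.Gamma (ν * (n + 1 : ℕ) + 1)) := by
    intro n
    rw [ml_beta ν hν t ht (ν * n) (by positivity), ← Real.rpow_natCast, ← Real.rpow_mul ht.le]
    push_cast
    congr 2 <;> ring_nf
  have hKi : ∀ n, IntegrableOn (K n) (Set.Ioc 0 t) := by
    intro n
    rw [← intervalIntegrable_iff_integrableOn_Ioc_of_le ht.le]
    apply intervalIntegral.intervalIntegrable_of_integral_ne_zero
    rw [hKint]
    have h1 := hG n
    have h2 := hG (n + 1)
    positivity
  set c : ℕ → ℂ := fun n => (-lam) ^ n / (Real.Gamma (ν * n + 1) : ℂ) with hc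
  set F : ℕ → ℝ → ℂ := fun n τ => c n * (K n τ : ℂ) with hF
  have hFi : ∀ n, Integrable (F n) (volume.restrict (Set.Ioc 0 t)) :=
    fun n => ((hKi n).ofReal).const_mul _
  have hFn : ∀ n, ∫ τ in Set.Ioc 0 t, ‖F n τ‖ =
      (Real.Gamma ν / ‖lam‖) * ((‖lam‖ * t ^ ν) ^ (n + 1) / Real.Gamma (ν * (n + 1 : ℕ) + 1)) ∨
      lam = 0 := by
    intro n
    by_cases hl : lam = 0
    · exact Or.inr hl
    left
    have hl' : ‖lam‖ ≠ 0 := by simpa using hl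
    have : ∫ τ in Set.Ioc 0 t, ‖F n τ‖ = ∫ τ in Set.Ioc 0 t, ‖c n‖ * K n τ := by
      apply setIntegral_congr_fun measurableSet_Ioc
      intro τ hτ
      have h1 : 0 ≤ t - τ := by linarith [hτ.2]
      have h2 : 0 ≤ τ := hτ.1.le
      have : 0 ≤ K n τ := by simp only [hK]; positivity
      simp only [hF]
      rw [norm_mul, Complex.norm_real, Real.norm_of_nonneg this]
    rw [this, integral_const_mul, ← intervalIntegral.integral_of_le ht.le, hKint]
    simp only [hc]
    rw [norm_div, norm_pow, Complex.norm_real, Real.norm_of_nonneg (hG n).le, norm_neg]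
    have h1 := (hG n).ne'
    have h2 := (hG (n + 1)).ne'
    field_simp
    ring
  by_cases hl : lam = 0
  · rw [hsplit]
    simp [hl]
  have hs : Summable (fun n => ∫ τ in Set.Ioc 0 t, ‖F n τ‖) := by
    have h1 := (summable_nat_add_iff 1).2
      (ml_summable_s6 ν hν (‖lam‖ * t ^ ν) (by positivity))
    exact (h1.mul_left (Real.Gamma ν / ‖lam‖)).congr
      (fun n => ((hFn n).resolve_right hl).symm)
  have key := hasSum_integral_of_summable_integral_norm hFi hs
  have hI : ∫ τ in (0 : ℝ)..t, (((t - τ) ^ (ν - 1) : ℝ) : ℂ) * u τ =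
      ∫ τ in Set.Ioc 0 t, ∑' n, F n τ := by
    rw [intervalIntegral.integral_of_le ht.le]
    apply setIntegral_congr_fun measurableSet_Ioc
    intro τ hτ
    simp only
    rw [hu, mittagLeffler, ← tsum_mul_left]
    congr 1
    ext n
    simp only [hF, hc, hK]
    rw [Real.rpow_mul hτ.1.le, Real.rpow_natCast]
    push_cast
    ring
  rw [hsplit, hI, ← key.tsum_eq, ← tsum_mul_left, sub_eq_add_neg, ← tsum_neg]
  congr 2
  ext n
  simp only [hF]
  rw [integral_const_mul, integral_complex_ofReal, ← intervalIntegral.integral_of_le ht.le, hKint]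
  simp only [hc]
  have h1 : (Real.Gamma (ν * n + 1) : ℂ) ≠ 0 := by exact_mod_cast (hG n).ne'
  have h2 : (Real.Gamma (ν * (n + 1 : ℕ) + 1) : ℂ) ≠ 0 := by exact_mod_cast (hG (n + 1)).ne'
  rw [Complex.ofReal_mul, Complex.ofReal_div, Complex.ofReal_mul, Complex.ofReal_pow, mul_pow]
  field_simp
  ring
end
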